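/- Let d ∈ ℝⁿ, d ≠ 0, be a non-increasing direction for m at x₀, i.e. ⟨∇m_ℓ(x₀), d⟩ ≤ 0 for all ℓ = 1, …, k, and set w := − max_{1≤ℓ≤k} ⟨∇m_ℓ(x₀), d⟩ ≥ 0. Let q ∈ {1, …, k} be any index and let σ̄ ≥ min{Δ, ‖d‖_∞} be such that x₀ + σ·d/‖d‖_∞ ∈ B for all σ ∈ [0, σ̄]. Then m_q(x₀) − inf_{0 ≤ σ ≤ σ̄} m_q(x₀ + σ·d/‖d‖_∞) ≥ (w/2) · min{ w/(‖d‖_∞² · c · H), Δ/‖d‖_∞, 1 }. (Lemma 5.4.) -/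

import Mathlib

noncomputable section

/-- The ℓ^∞ (maximum) norm on Euclidean space. -/
def supNorm {n : ℕ} (v : EuclideanSpace ℝ (Fin n)) : ℝ :=
  ‖(WithLp.equiv 2 (Fin n → ℝ)) v‖

/-- Frobenius norm of the Hessian of `g : ℝⁿ → ℝ` at `x`. -/
def frobHess {n : ℕ} (g : EuclideanSpace ℝ (Fin n) → ℝ)
    (x : EuclideanSpace ℝ (Fin n)) : ℝ :=
  Real.sqrt (∑ i : Fin n, ∑ j : Fin n,
    (fderiv ℝ (fun y => fderiv ℝ g y (EuclideanSpace.single j (1:ℝ))) x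
      (EuclideanSpace.single i (1:ℝ))) ^ 2)

/-- Second-order upper bound for a function on `[0, T]` whose second derivative is at most `L`. -/
theorem le_quadratic_of_second_deriv_le {f f' f'' : ℝ → ℝ} {T L : ℝ} (hT : 0 ≤ T)
    (hf : ∀ t ∈ Set.Icc 0 T, HasDerivAt f (f' t) t)
    (hf' : ∀ t ∈ Set.Icc 0 T, HasDerivAt f' (f'' t) t)
    (hL : ∀ t ∈ Set.Icc 0 T, f'' t ≤ L) :
    f T ≤ f 0 + T * f' 0 + L * T ^ 2 / 2 := by
  have slope : ∀ ⦃t⦄, t ∈ Set.Icc 0 T → f' t ≤ f' 0 + L * t :=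
    image_le_of_deriv_right_le_deriv_boundary (B := fun t => f' 0 + L * t) (B' := fun _ => L)
      (fun t ht => (hf' t ht).continuousAt.continuousWithinAt)
      (fun t ht => (hf' t (Set.Ico_subset_Icc_self ht)).hasDerivWithinAt) (by simp)
      (by fun_prop)
      (fun t _ => (by simpa using ((hasDerivAt_id t).const_mul L).const_add (f' 0) :
        HasDerivAt (fun t => f' 0 + L * t) L t).hasDerivWithinAt)
      (fun t ht => hL t (Set.Ico_subset_Icc_self ht))
  refine image_le_of_deriv_right_le_deriv_boundary
    (B := fun t => f 0 + t * f' 0 + L * t ^ 2 / 2) (B' := fun t => f' 0 + L * t)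
    (fun t ht => (hf t ht).continuousAt.continuousWithinAt)
    (fun t ht => (hf t (Set.Ico_subset_Icc_self ht)).hasDerivWithinAt) (by simp)
    (by fun_prop) (fun t _ => HasDerivAt.hasDerivWithinAt ?_)
    (fun t ht => slope (Set.Ico_subset_Icc_self ht)) (Set.right_mem_Icc.2 hT)
  refine ((((hasDerivAt_id t).mul_const (f' 0)).const_add (f 0)).add
    ((((hasDerivAt_id t).pow 2).const_mul L).div_const 2)).congr_deriv ?_
  simp
  ring

theorem frobHess_eq {n : ℕ} {g : EuclideanSpace ℝ (Fin n) → ℝ} {x : EuclideanSpace ℝ (Fin n)}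
    (hg : DifferentiableAt ℝ (fderiv ℝ g) x) :
    frobHess g x = Real.sqrt (∑ i : Fin n, ∑ j : Fin n,
      (fderiv ℝ (fderiv ℝ g) x (EuclideanSpace.single i (1 : ℝ))
        (EuclideanSpace.single j (1 : ℝ))) ^ 2) := by
  have entry : ∀ v : EuclideanSpace ℝ (Fin n), fderiv ℝ (fun y => fderiv ℝ g y v) x =
      (fderiv ℝ (fderiv ℝ g) x).flip v := fun v => by
    simpa using (hg.hasFDerivAt.clm_apply (hasFDerivAt_const v x)).fderiv
  simp only [frobHess, entry, ContinuousLinearMap.flip_apply]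

theorem ContDiffOn.continuousOn_frobHess {n : ℕ} {g : EuclideanSpace ℝ (Fin n) → ℝ}
    {U : Set (EuclideanSpace ℝ (Fin n))} (hg : ContDiffOn ℝ 2 g U) (hU : IsOpen U) :
    ContinuousOn (frobHess g) U := by
  have h1 : ContDiffOn ℝ 1 (fderiv ℝ g) U := hg.fderiv_of_isOpen hU (by norm_num)
  have h2 : ContinuousOn (fderiv ℝ (fderiv ℝ g)) U := h1.continuousOn_fderiv_of_isOpen hU le_rfl
  refine ContinuousOn.congr ?_ fun x hx =>
    frobHess_eq ((h1.differentiableOn one_ne_zero).differentiableAt (hU.mem_nhds hx))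
  fun_prop

/-- The Hessian quadratic form is bounded by the Frobenius norm. -/
theorem hessian_apply_self_le_frobHess {n : ℕ} {g : EuclideanSpace ℝ (Fin n) → ℝ}
    {x : EuclideanSpace ℝ (Fin n)} (hg : DifferentiableAt ℝ (fderiv ℝ g) x)
    (v : EuclideanSpace ℝ (Fin n)) :
    fderiv ℝ (fderiv ℝ g) x v v ≤ frobHess g x * ‖v‖ ^ 2 := by
  rw [frobHess_eq hg]
  set A := fderiv ℝ (fderiv ℝ g) x
  have expand : v = ∑ i, v i • EuclideanSpace.single i (1 : ℝ) := by
    ext j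
    simp [Pi.single_apply]
  have bilinear : A v v = ∑ p : Fin n × Fin n,
      A (EuclideanSpace.single p.1 1) (EuclideanSpace.single p.2 1) * (v p.1 * v p.2) := by
    conv_lhs => rw [expand]
    simp only [map_sum, map_smul, sum_apply, smul_apply,
      smul_eq_mul, Fintype.sum_prod_type, Finset.mul_sum]
    rw [Finset.sum_comm]
    refine Finset.sum_congr rfl fun i _ => Finset.sum_congr rfl fun j _ => ?_
    ring
  have norm_eq : ‖v‖ ^ 2 = Real.sqrt (∑ p : Fin n × Fin n, (v p.1 * v p.2) ^ 2) := by
    have : ∑ p : Fin n × Fin n, (v p.1 * v p.2) ^ 2 = (‖v‖ ^ 2) ^ 2 := by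
      rw [EuclideanSpace.real_norm_sq_eq, sq (∑ i, _), Finset.sum_mul_sum,
        Fintype.sum_prod_type]
      simp only [mul_pow]
    rw [this, Real.sqrt_sq (by positivity)]
  rw [bilinear, norm_eq, ← Fintype.sum_prod_type']
  exact Real.sum_mul_le_sqrt_mul_sqrt _ _ _

/-- Quadratic upper bound along a ray on which the Frobenius norm of the Hessian is at most `H`. -/
theorem le_quadratic_along_ray {n : ℕ} {g : EuclideanSpace ℝ (Fin n) → ℝ}
    {U : Set (EuclideanSpace ℝ (Fin n))} (hg : ContDiffOn ℝ 2 g U) (hU : IsOpen U)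
    {x d : EuclideanSpace ℝ (Fin n)} {t H : ℝ} (ht : 0 ≤ t)
    (hray : ∀ r ∈ Set.Icc 0 t, x + r • d ∈ U)
    (hH : ∀ r ∈ Set.Icc 0 t, frobHess g (x + r • d) ≤ H) :
    g (x + t • d) ≤ g x + t * fderiv ℝ g x d + H * ‖d‖ ^ 2 * t ^ 2 / 2 := by
  have hline : ∀ r : ℝ, HasDerivAt (fun r : ℝ => x + r • d) d r := fun r => by
    simpa using ((hasDerivAt_id r).smul_const d).const_add x
  have hdiff : ∀ y ∈ U, DifferentiableAt ℝ g y := fun y hy =>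
    (hg.differentiableOn two_ne_zero).differentiableAt (hU.mem_nhds hy)
  have hdiff2 : ∀ y ∈ U, DifferentiableAt ℝ (fderiv ℝ g) y := fun y hy =>
    ((hg.fderiv_of_isOpen hU (m := 1) (by norm_num)).differentiableOn
      one_ne_zero).differentiableAt (hU.mem_nhds hy)
  have taylor := le_quadratic_of_second_deriv_le (f := fun r => g (x + r • d))
    (f' := fun r => fderiv ℝ g (x + r • d) d)
    (f'' := fun r => fderiv ℝ (fderiv ℝ g) (x + r • d) d d) (L := H * ‖d‖ ^ 2) ht
    (fun r hr => (hdiff _ (hray r hr)).hasFDerivAt.comp_hasDerivAt r (hline r))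
    (fun r hr => by
      have hcomp : HasDerivAt (fun r : ℝ => fderiv ℝ g (x + r • d))
          (fderiv ℝ (fderiv ℝ g) (x + r • d) d) r :=
        (hdiff2 _ (hray r hr)).hasFDerivAt.comp_hasDerivAt r (hline r)
      simpa using hcomp.clm_apply (hasDerivAt_const r d))
    (fun r hr => (hessian_apply_self_le_frobHess (hdiff2 _ (hray r hr)) d).trans
      (mul_le_mul_of_nonneg_right (hH r hr) (by positivity)))
  simpa only [zero_smul, add_zero] using taylor

/-- Lemma 5.4: minimizing a model `m_q` along a non-increasing direction `d`
within the trust region `B` achieves a guaranteed decrease. -/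
theorem decrease_along_nonincreasing_direction
    (n k : ℕ) (hk : 1 ≤ k)
    (X : Set (EuclideanSpace ℝ (Fin n)))
    (hXne : X.Nonempty) (hXconv : Convex ℝ X) (hXcomp : IsCompact X)
    (m : Fin k → EuclideanSpace ℝ (Fin n) → ℝ)
    (U : Set (EuclideanSpace ℝ (Fin n))) (hUopen : IsOpen U) (hXU : X ⊆ U)
    (hm : ∀ ℓ, ContDiffOn ℝ 2 (m ℓ) U)
    (x₀ : EuclideanSpace ℝ (Fin n)) (hx₀ : x₀ ∈ X)
    (Δ : ℝ) (hΔ : 0 < Δ)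
    (B : Set (EuclideanSpace ℝ (Fin n))) (hB : B = {y ∈ X | supNorm (y - x₀) ≤ Δ})
    -- `H = max_ℓ sup_{x∈B} ‖∇²m_ℓ(x)‖_F`
    (H : ℝ) (hH : H = ⨆ ℓ : Fin k, ⨆ y : B, frobHess (m ℓ) (y : EuclideanSpace ℝ (Fin n)))
    -- norm-relating constant: `‖v‖₂ ≤ √c·‖v‖_∞`
    (c : ℝ) (hc : 0 < c)
    (hcn : ∀ v : EuclideanSpace ℝ (Fin n), ‖v‖ ≤ Real.sqrt c * supNorm v)
    -- `d ≠ 0` a non-increasing direction for `m` at `x₀`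
    (d : EuclideanSpace ℝ (Fin n)) (hd : d ≠ 0)
    (hdesc : ∀ ℓ, fderiv ℝ (m ℓ) x₀ d ≤ 0)
    (w : ℝ) (hw : w = -(⨆ ℓ, fderiv ℝ (m ℓ) x₀ d))
    (q : Fin k)
    (σbar : ℝ) (hσbar : min Δ (supNorm d) ≤ σbar)
    (hfeas : ∀ σ ∈ Set.Icc (0:ℝ) σbar, x₀ + (σ / supNorm d) • d ∈ B) :
    m q x₀ - sInf ((fun σ => m q (x₀ + (σ / supNorm d) • d)) '' Set.Icc (0:ℝ) σbar)
      ≥ (w / 2) * min (w / (supNorm d ^ 2 * c * H)) (min (Δ / supNorm d) 1) := by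
  have hs : 0 < supNorm d := by
    rw [supNorm, norm_pos_iff]
    simpa using hd
  have hσ0 : 0 ≤ σbar := (le_min hΔ.le hs.le).trans hσbar
  have hBX : B ⊆ X := hB ▸ Set.sep_subset _ _
  have hBU : B ⊆ U := hBX.trans hXU
  have hH_ge : ∀ y ∈ B, frobHess (m q) y ≤ H := fun y hy => by
    have bdd : BddAbove (Set.range fun y : B => frobHess (m q) y) := by
      refine (hXcomp.bddAbove_image (((hm q).continuousOn_frobHess hUopen).mono hXU)).mono ?_
      rintro _ ⟨z, rfl⟩
      exact ⟨z, hBX z.2, rfl⟩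
    rw [hH]
    exact (le_ciSup bdd ⟨y, hy⟩).trans
      (le_ciSup (f := fun ℓ => ⨆ y : B, frobHess (m ℓ) y) (Set.finite_range _).bddAbove q)
  have hx₀B : x₀ ∈ B := by simpa using hfeas 0 ⟨le_rfl, hσ0⟩
  have hH0 : 0 ≤ H := (Real.sqrt_nonneg _).trans (hH_ge x₀ hx₀B)
  have hw0 : 0 ≤ w := by
    rw [hw, neg_nonneg]
    exact Real.iSup_nonpos hdesc
  have hslope : fderiv ℝ (m q) x₀ d ≤ -w := by
    rw [hw, neg_neg]
    exact le_ciSup (f := fun ℓ => fderiv ℝ (m ℓ) x₀ d) (Set.finite_range _).bddAbove q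
  set L := supNorm d ^ 2 * c * H with hL
  have hL0 : 0 ≤ L := by positivity
  set t := min (w / L) (min (Δ / supNorm d) 1)
  have ht0 : 0 ≤ t := by positivity
  have htL : L * t ≤ w := by
    rcases hL0.eq_or_lt with h | h
    · simpa [← h] using hw0
    · rw [mul_comm]
      exact (le_div_iff₀ h).1 (min_le_left _ _)
  have htσ : t * supNorm d ≤ σbar := by
    refine le_trans (le_min ?_ ?_) hσbar
    · exact (le_div_iff₀ hs).1 ((min_le_right _ _).trans (min_le_left _ _))
    · exact mul_le_of_le_one_left hs.le ((min_le_right _ _).trans (min_le_right _ _))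
  have hray : ∀ r ∈ Set.Icc 0 t, x₀ + r • d ∈ B := fun r hr => by
    have := hfeas (r * supNorm d) ⟨mul_nonneg hr.1 hs.le,
      (mul_le_mul_of_nonneg_right hr.2 hs.le).trans htσ⟩
    rwa [mul_div_cancel_right₀ _ hs.ne'] at this
  have hdsq : ‖d‖ ^ 2 ≤ supNorm d ^ 2 * c := by
    have := pow_le_pow_left₀ (norm_nonneg d) (hcn d) 2
    rwa [mul_pow, Real.sq_sqrt hc.le, mul_comm] at this
  have taylor := le_quadratic_along_ray (hm q) hUopen ht0 (fun r hr => hBU (hray r hr))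
    (fun r hr => hH_ge _ (hray r hr))
  have hHd : H * ‖d‖ ^ 2 ≤ L := by
    rw [hL, mul_comm _ H]
    exact mul_le_mul_of_nonneg_left hdsq hH0
  have hbdd : BddBelow ((fun σ => m q (x₀ + (σ / supNorm d) • d)) '' Set.Icc (0:ℝ) σbar) := by
    refine (hXcomp.bddBelow_image ((hm q).continuousOn.mono hXU)).mono ?_
    rintro _ ⟨σ, hσ, rfl⟩
    exact ⟨_, hBX (hfeas σ hσ), rfl⟩
  have hinf := csInf_le hbdd
    (Set.mem_image_of_mem _ (show t * supNorm d ∈ Set.Icc 0 σbar from ⟨by positivity, htσ⟩))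
  simp only [mul_div_cancel_right₀ _ hs.ne'] at hinf
  nlinarith [mul_le_mul_of_nonneg_left hslope ht0, mul_le_mul_of_nonneg_left htL ht0,
    mul_le_mul_of_nonneg_right hHd (sq_nonneg t)]
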